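/- Let K be a finite field with q elements, let s ≥ 2, and let T be the projective torus in ℙ^{s−1} over K. Then for every d ≥ 1 the length of the parameterized code C_T(d) is (q−1)^{s−1} and its dimension is dim_K C_T(d) = Σ_{j=0}^{⌊d/(q−1)⌋} (−1)^j · C(s−1, j) · C(s−1+d−j(q−1), s−1), where C(·,·) denotes a binomial coefficient. -/

import Mathlib

open MvPolynomial

/-- The projective torus in `ℙ^(s-1)` over `K`: the classes of points all of whose
coordinates are nonzero (a condition invariant under scaling, tested on the chosen
representative). -/
noncomputable def projTorus (K : Type) [Field K] (s : ℕ) :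
    Set (Projectivization K (Fin s → K)) :=
  {p | ∀ i, p.rep i ≠ 0}

/-- The Hilbert function of a set `Y` of points of projective space (equivalently the
dimension of the parameterized code of order `d` on `Y`): the `K`-dimension of the
space of functions on `Y` of the form `[P] ↦ F(P)/P_{i0}^d` with `F` homogeneous of
degree `d`. -/
noncomputable def hilbFn (K : Type) [Field K] {ι : Type}
    (Y : Set (Projectivization K (ι → K))) (i0 : ι) (d : ℕ) : ℕ :=
  Module.finrank K ↥(Submodule.span K
    {f : ↥Y → K | ∃ F : MvPolynomial ι K, F.IsHomogeneous d ∧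
      ∀ p : ↥Y, f p = eval p.1.rep F / (p.1.rep i0) ^ d})

/-!
Normalizing the first coordinate to `1` identifies the projective torus with the affine torus
`(Kˣ)ⁿ`, `n = s - 1`, and a homogeneous polynomial of degree `d` with its dehomogenization. The code
is therefore spanned by the characters `x ↦ x ^ a` with `|a| ≤ d`. Since `Kˣ` is cyclic of order
`m = q - 1`, exponents may be reduced modulo `m`, which does not increase the degree, and the
characters with exponents in `{0, …, m - 1}` are distinct, hence linearly independent (Dedekind).
The dimension is thus the number of such exponents of degree at most `d`, whose generating function
is `((1 - X ^ m) / (1 - X)) ^ n / (1 - X) = (1 - X ^ m) ^ n / (1 - X) ^ (n + 1)`.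
-/

section BoundedExponents

/-- The exponent vectors `b : ι → {0, …, m - 1}` of total degree at most `d`. -/
def boundedExponents (ι : Type*) [Fintype ι] [DecidableEq ι] (m d : ℕ) : Finset (ι → Fin m) :=
  {b | ∑ i, (b i : ℕ) ≤ d}

variable {ι : Type*} [Fintype ι]

theorem geom_sum_pow_card_eq_sum_pow_sum {R : Type*} [CommSemiring R] [DecidableEq ι]
    (x : R) (m : ℕ) :
    (∑ k ∈ Finset.range m, x ^ k) ^ Fintype.card ι =
      ∑ b : ι → Fin m, x ^ ∑ i, (b i : ℕ) := by
  calc (∑ k ∈ Finset.range m, x ^ k) ^ Fintype.card ι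
      = ∏ _i : ι, ∑ k : Fin m, x ^ (k : ℕ) := by
        rw [Finset.prod_const, Finset.card_univ, Finset.sum_range]
    _ = ∑ b : ι → Fin m, ∏ i, x ^ (b i : ℕ) := by
        rw [Finset.prod_univ_sum, Fintype.piFinset_univ]
    _ = ∑ b : ι → Fin m, x ^ ∑ i, (b i : ℕ) := by
        simp only [Finset.prod_pow_eq_pow_sum]

theorem mk_card_boundedExponents [DecidableEq ι] (R : Type*) [CommSemiring R] (m : ℕ) :
    (PowerSeries.mk fun d => ((boundedExponents ι m d).card : R)) =
      (∑ k ∈ Finset.range m, PowerSeries.X ^ k) ^ Fintype.card ι * PowerSeries.mk 1 := by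
  ext d
  simp [geom_sum_pow_card_eq_sum_pow_sum, Finset.sum_mul, PowerSeries.coeff_X_pow_mul',
    boundedExponents]

theorem geom_sum_pow_mul_mk_one (R : Type*) [CommRing R] (m n : ℕ) :
    (∑ k ∈ Finset.range m, PowerSeries.X ^ k) ^ n * PowerSeries.mk 1 =
      (1 - PowerSeries.X ^ m) ^ n * PowerSeries.mk fun e => ((n + e).choose n : R) := by
  have cancel : (1 - PowerSeries.X : PowerSeries R) ^ n *
      (PowerSeries.mk fun e => ((n + e).choose n : R)) = PowerSeries.mk 1 := by
    rw [← PowerSeries.mk_one_pow_eq_mk_choose_add, pow_succ, ← mul_assoc, ← mul_pow,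
      mul_comm (1 - PowerSeries.X), PowerSeries.mk_one_mul_one_sub_eq_one, one_pow, one_mul]
  rw [← geom_sum_mul_neg, mul_pow, mul_assoc, cancel]

theorem coeff_one_sub_X_pow_pow_mul {R : Type*} [CommRing R] {m : ℕ} (hm : 0 < m) (n d : ℕ)
    (f : PowerSeries R) :
    PowerSeries.coeff d ((1 - PowerSeries.X ^ m) ^ n * f) =
      ∑ j ∈ Finset.range (d / m + 1),
        (-1) ^ j * (n.choose j : R) * PowerSeries.coeff (d - j * m) f := by
  have binomial_expansion : (1 - PowerSeries.X ^ m : PowerSeries R) ^ n =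
      ∑ j ∈ Finset.range (n + 1),
        PowerSeries.C ((-1) ^ j * (n.choose j : R)) * PowerSeries.X ^ (j * m) := by
    rw [sub_eq_neg_add, add_pow]
    refine Finset.sum_congr rfl fun j _ => ?_
    rw [neg_pow, ← pow_mul, mul_comm m j]
    simp only [one_pow, map_mul, map_pow, map_neg, map_one, map_natCast]
    ring
  simp only [binomial_expansion, Finset.sum_mul, map_sum, mul_assoc, PowerSeries.coeff_C_mul,
    PowerSeries.coeff_X_pow_mul']
  apply Finset.sum_congr_of_eq_on_inter <;>
    simp only [Finset.mem_range, Nat.lt_succ_iff, Nat.le_div_iff_mul_le hm, not_le]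
  · intro j _ hj
    simp [hj.not_ge]
  · intro j _ hj
    simp [Nat.choose_eq_zero_of_lt hj]
  · intro j _ hj
    simp [hj]

theorem card_boundedExponents [DecidableEq ι] {m : ℕ} (hm : 0 < m) (d : ℕ) :
    ((boundedExponents ι m d).card : ℤ) =
      ∑ j ∈ Finset.range (d / m + 1), (-1 : ℤ) ^ j * ((Fintype.card ι).choose j : ℤ) *
        ((Fintype.card ι + d - j * m).choose (Fintype.card ι) : ℤ) := by
  have generating_function :=
    (mk_card_boundedExponents (ι := ι) ℤ m).trans (geom_sum_pow_mul_mk_one ℤ m (Fintype.card ι))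
  have coeff_eq := congrArg (PowerSeries.coeff d) generating_function
  rw [PowerSeries.coeff_mk, coeff_one_sub_X_pow_pow_mul hm] at coeff_eq
  rw [coeff_eq]
  refine Finset.sum_congr rfl fun j hj => ?_
  have hjd : j * m ≤ d := (Nat.le_div_iff_mul_le hm).mp (Finset.mem_range_succ_iff.mp hj)
  rw [PowerSeries.coeff_mk, Nat.add_sub_assoc hjd]

end BoundedExponents

section MonomialCharacter

variable {ι K : Type*} [Fintype ι]

/-- The monomial `x ^ a` as a character of the affine torus `(Kˣ)^ι`, with values in `K`. -/
def monomialCharacter [CommMonoid K] (a : ι → ℕ) : (ι → Kˣ) →* K where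
  toFun x := ∏ i, (x i : K) ^ a i
  map_one' := by simp
  map_mul' x y := by simp [mul_pow, Finset.prod_mul_distrib]

theorem monomialCharacter_apply [CommMonoid K] (a : ι → ℕ) (x : ι → Kˣ) :
    monomialCharacter a x = ∏ i, (x i : K) ^ a i :=
  rfl

theorem monomialCharacter_mod_card_units [CommMonoid K] (a : ι → ℕ) :
    monomialCharacter (K := K) (fun i => a i % Nat.card Kˣ) = monomialCharacter a := by
  ext x
  refine Finset.prod_congr rfl fun i _ => ?_
  rw [← Units.val_pow_eq_pow_val, pow_mod_natCard, Units.val_pow_eq_pow_val]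

theorem monomialCharacter_mulSingle [CommMonoid K] [DecidableEq ι] (a : ι → ℕ) (i : ι) (g : Kˣ) :
    monomialCharacter a (Pi.mulSingle i g) = ((g ^ a i : Kˣ) : K) := by
  rw [monomialCharacter_apply, Finset.prod_eq_single i] <;>
    simp +contextual [Pi.mulSingle_eq_of_ne]

theorem image_monomialCharacter_sum_le [CommMonoid K] [DecidableEq ι] [Finite Kˣ] (d : ℕ) :
    (fun a : ι → ℕ => (monomialCharacter a : (ι → Kˣ) →* K)) '' {a | ∑ i, a i ≤ d} =
      (fun b : ι → Fin (Nat.card Kˣ) => monomialCharacter fun i => (b i : ℕ)) ''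
        boundedExponents ι (Nat.card Kˣ) d := by
  apply Set.Subset.antisymm
  · rintro _ ⟨a, ha, rfl⟩
    refine ⟨fun i => ⟨a i % Nat.card Kˣ, Nat.mod_lt _ Nat.card_pos⟩, ?_,
      monomialCharacter_mod_card_units a⟩
    have hmod : ∑ i, a i % Nat.card Kˣ ≤ d :=
      (Finset.sum_le_sum fun i _ => Nat.mod_le _ _).trans ha
    simpa [boundedExponents] using hmod
  · rintro _ ⟨b, hb, rfl⟩
    exact ⟨fun i => b i, by simpa [boundedExponents] using hb, rfl⟩

variable [CommRing K] [IsDomain K] [Finite Kˣ]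

theorem monomialCharacter_fin_injective :
    Function.Injective fun b : ι → Fin (Nat.card Kˣ) =>
      (monomialCharacter fun i => (b i : ℕ) : (ι → Kˣ) →* K) := by
  classical
  intro b c hbc
  obtain ⟨g, hg⟩ := IsCyclic.exists_ofOrder_eq_natCard (α := Kˣ)
  ext i
  have hpow : g ^ (b i : ℕ) = g ^ (c i : ℕ) := by
    simpa only [monomialCharacter_mulSingle, Units.val_inj] using
      DFunLike.congr_fun hbc (Pi.mulSingle i g)
  have lt_orderOf : ∀ k : Fin (Nat.card Kˣ), (k : ℕ) < orderOf g := fun k => by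
    rw [hg]; exact k.isLt
  exact pow_injOn_Iio_orderOf (lt_orderOf _) (lt_orderOf _) hpow

theorem linearIndependent_monomialCharacter_fin :
    LinearIndependent K fun b : ι → Fin (Nat.card Kˣ) =>
      ⇑(monomialCharacter fun i => (b i : ℕ) : (ι → Kˣ) →* K) :=
  (linearIndependent_monoidHom (ι → Kˣ) K).comp _ monomialCharacter_fin_injective

theorem finrank_span_monomialCharacter_sum_le [DecidableEq ι] (d : ℕ) :
    Module.finrank K (Submodule.span K
      ((fun a : ι → ℕ => ⇑(monomialCharacter a : (ι → Kˣ) →* K)) '' {a | ∑ i, a i ≤ d})) =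
      (boundedExponents ι (Nat.card Kˣ) d).card := by
  have image_eq := congrArg (Set.image fun χ : (ι → Kˣ) →* K => ⇑χ)
    (image_monomialCharacter_sum_le (ι := ι) (K := K) d)
  rw [Set.image_image, Set.image_image] at image_eq
  rw [image_eq, Set.image_eq_range]
  exact (finrank_span_eq_card (linearIndependent_monomialCharacter_fin.comp _
    Subtype.val_injective)).trans (Fintype.card_coe _)

end MonomialCharacter

section HomogeneousPolynomials

theorem eval_smul_of_isHomogeneous {R σ : Type*} [CommSemiring R] {F : MvPolynomial σ R} {d : ℕ}
    (hF : F.IsHomogeneous d) (c : R) (v : σ → R) : eval (c • v) F = c ^ d * eval v F := by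
  rw [eval_eq, eval_eq, Finset.mul_sum]
  refine Finset.sum_congr rfl fun e he => ?_
  have hdeg : ∑ i ∈ e.support, e i = d := (hF.degree_eq_sum_deg_support he).symm
  simp only [Pi.smul_apply, smul_eq_mul, mul_pow, Finset.prod_mul_distrib,
    Finset.prod_pow_eq_pow_sum, hdeg]
  ring

theorem homogeneousSubmodule_eq_span_monomial (σ R : Type*) [CommSemiring R] (d : ℕ) :
    homogeneousSubmodule σ R d =
      Submodule.span R ((fun e => monomial e 1) '' {e : σ →₀ ℕ | e.degree = d}) := by
  rw [homogeneousSubmodule_eq_finsupp_supported]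
  exact restrictSupport_eq_span R _

theorem image_tail_degree_eq (n d : ℕ) :
    (fun (e : Fin (n + 1) →₀ ℕ) (i : Fin n) => e i.succ) '' {e | e.degree = d} =
      {a | ∑ i, a i ≤ d} := by
  ext a
  constructor
  · rintro ⟨e, he, rfl⟩
    rw [Set.mem_ofPred_eq, Finsupp.degree_eq_sum, Fin.sum_univ_succ] at he
    exact he ▸ Nat.le_add_left _ _
  · intro ha
    refine ⟨Finsupp.equivFunOnFinite.symm (Fin.cons (d - ∑ i, a i) a), ?_, by simp⟩
    simpa [Finsupp.degree_eq_sum, Fin.sum_univ_succ] using Nat.sub_add_cancel ha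

end HomogeneousPolynomials

section ProjectiveTorus

variable {K : Type} [Field K] {n : ℕ}

/-- The representative `(1, x₁, …, xₙ)` of a point of the projective torus. -/
def torusVec (x : Fin n → Kˣ) : Fin (n + 1) → K :=
  Fin.cons 1 fun i => (x i : K)

@[simp]
theorem torusVec_zero (x : Fin n → Kˣ) : torusVec x 0 = 1 :=
  rfl

@[simp]
theorem torusVec_succ (x : Fin n → Kˣ) (i : Fin n) : torusVec x i.succ = x i :=
  rfl

theorem torusVec_apply_ne_zero (x : Fin n → Kˣ) (i : Fin (n + 1)) : torusVec x i ≠ 0 := by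
  cases i using Fin.cases <;> simp

theorem torusVec_ne_zero (x : Fin n → Kˣ) : torusVec x ≠ 0 :=
  fun h => torusVec_apply_ne_zero x 0 (congrFun h 0)

theorem mk_torusVec_mem_projTorus (x : Fin n → Kˣ) :
    Projectivization.mk K (torusVec x) (torusVec_ne_zero x) ∈ projTorus K (n + 1) := by
  intro i
  obtain ⟨a, ha⟩ := Projectivization.exists_smul_eq_mk_rep K (torusVec x) (torusVec_ne_zero x)
  rw [← ha]
  exact mul_ne_zero a.ne_zero (torusVec_apply_ne_zero x i)

/-- The projective torus in `ℙⁿ` is parametrized by the affine torus `(Kˣ)ⁿ`, by normalizing the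
zeroth homogeneous coordinate to `1`. -/
noncomputable def torusEquiv (K : Type) [Field K] (n : ℕ) :
    (Fin n → Kˣ) ≃ projTorus K (n + 1) where
  toFun x := ⟨Projectivization.mk K (torusVec x) (torusVec_ne_zero x), mk_torusVec_mem_projTorus x⟩
  invFun p i := Units.mk0 (p.1.rep i.succ / p.1.rep 0) (div_ne_zero (p.2 _) (p.2 _))
  left_inv x := by
    obtain ⟨a, ha⟩ := Projectivization.exists_smul_eq_mk_rep K (torusVec x) (torusVec_ne_zero x)
    ext i
    simp [← ha, Units.smul_def]
  right_inv := by
    rintro ⟨p, hp⟩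
    refine Subtype.ext (Eq.trans ?_ p.mk_rep)
    rw [Projectivization.mk_eq_mk_iff']
    refine ⟨(p.rep 0)⁻¹, funext fun i => ?_⟩
    cases i using Fin.cases with
    | zero => simp [hp 0]
    | succ i => simp [div_eq_inv_mul]

theorem ncard_projTorus (K : Type) [Field K] (n : ℕ) :
    (projTorus K (n + 1)).ncard = Nat.card Kˣ ^ n := by
  rw [← Nat.card_coe_set_eq, ← Nat.card_congr (torusEquiv K n), Nat.card_fun, Nat.card_fin]

theorem eval_rep_torusEquiv_div {F : MvPolynomial (Fin (n + 1)) K} {d : ℕ}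
    (hF : F.IsHomogeneous d) (x : Fin n → Kˣ) :
    eval (torusEquiv K n x).1.rep F / (torusEquiv K n x).1.rep 0 ^ d = eval (torusVec x) F := by
  obtain ⟨a, ha⟩ := Projectivization.exists_smul_eq_mk_rep K (torusVec x) (torusVec_ne_zero x)
  have hrep : (torusEquiv K n x).1.rep = (a : K) • torusVec x := ha.symm
  rw [hrep, eval_smul_of_isHomogeneous hF]
  simp

/-- Evaluation of polynomials at the normalized representatives of the points of the projective
torus. -/
noncomputable def torusEval (K : Type) [Field K] (n : ℕ) :
    MvPolynomial (Fin (n + 1)) K →ₗ[K] ((Fin n → Kˣ) → K) :=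
  LinearMap.pi fun x => (aeval (torusVec x)).toLinearMap

theorem torusEval_apply (F : MvPolynomial (Fin (n + 1)) K) (x : Fin n → Kˣ) :
    torusEval K n F x = eval (torusVec x) F :=
  DFunLike.congr_fun (coe_aeval_eq_eval (torusVec x)) F

theorem torusEval_monomial_one (e : Fin (n + 1) →₀ ℕ) :
    torusEval K n (monomial e 1) = monomialCharacter fun i => e i.succ := by
  funext x
  rw [torusEval_apply, eval_monomial, Finsupp.prod_fintype _ _ fun _ => pow_zero _,
    Fin.prod_univ_succ]
  simp [monomialCharacter_apply]

theorem hilbFn_projTorus_eq_finrank_map_torusEval (K : Type) [Field K] (n d : ℕ) :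
    hilbFn K (projTorus K (n + 1)) 0 d =
      Module.finrank K ((homogeneousSubmodule (Fin (n + 1)) K d).map (torusEval K n)) := by
  rw [hilbFn, ← (LinearEquiv.funCongrLeft K K (torusEquiv K n)).finrank_map_eq,
    Submodule.map_span, ← Submodule.span_eq (Submodule.map (torusEval K n) _)]
  refine congrArg (fun S : Set ((Fin n → Kˣ) → K) => Module.finrank K (Submodule.span K S)) ?_
  apply Set.Subset.antisymm
  · rintro _ ⟨g, ⟨F, hF, hg⟩, rfl⟩
    refine ⟨F, hF, funext fun x => ?_⟩
    exact (torusEval_apply F x).trans ((eval_rep_torusEquiv_div hF x).symm.trans (hg _).symm)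
  · rintro _ ⟨F, hF, rfl⟩
    refine ⟨_, ⟨F, hF, fun p => rfl⟩, funext fun x => ?_⟩
    exact (eval_rep_torusEquiv_div hF x).trans (torusEval_apply F x).symm

theorem map_torusEval_homogeneousSubmodule (K : Type) [Field K] (n d : ℕ) :
    (homogeneousSubmodule (Fin (n + 1)) K d).map (torusEval K n) =
      Submodule.span K ((fun a : Fin n → ℕ => ⇑(monomialCharacter a : (Fin n → Kˣ) →* K)) ''
        {a | ∑ i, a i ≤ d}) := by
  rw [homogeneousSubmodule_eq_span_monomial, Submodule.map_span, Set.image_image,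
    ← image_tail_degree_eq, Set.image_image]
  simp only [torusEval_monomial_one]

theorem hilbFn_projTorus (K : Type) [Field K] [Finite Kˣ] (n d : ℕ) :
    hilbFn K (projTorus K (n + 1)) 0 d = (boundedExponents (Fin n) (Nat.card Kˣ) d).card := by
  rw [hilbFn_projTorus_eq_finrank_map_torusEval, map_torusEval_homogeneousSubmodule,
    finrank_span_monomialCharacter_sum_le]

end ProjectiveTorus

/-- The parameterized code of order `d` on the projective torus in `ℙ^(s-1)` has
length `(q-1)^(s-1)` and dimension
`Σ_{j=0}^{⌊d/(q-1)⌋} (-1)^j C(s-1,j) C(s-1+d-j(q-1), s-1)`. -/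
theorem stmt_9 (K : Type) [Field K] [Fintype K] (q s d : ℕ)
    (hK : Fintype.card K = q) (hs : 2 ≤ s) (hd : 1 ≤ d) :
    Set.ncard (projTorus K s) = (q - 1) ^ (s - 1) ∧
    (hilbFn K (projTorus K s) (⟨0, by omega⟩ : Fin s) d : ℤ) =
      ∑ j ∈ Finset.range (d / (q - 1) + 1),
        (-1 : ℤ) ^ j * ((s - 1).choose j : ℤ) *
          (((s - 1) + d - j * (q - 1)).choose (s - 1) : ℤ) := by
  obtain ⟨n, rfl⟩ : ∃ n, s = n + 1 := ⟨s - 1, by omega⟩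
  have card_units : Nat.card Kˣ = q - 1 := by rw [Nat.card_units, Nat.card_eq_fintype_card, hK]
  have units_pos : 0 < q - 1 := card_units ▸ Nat.card_pos
  refine ⟨card_units ▸ ncard_projTorus K n, ?_⟩
  have dimension : hilbFn K (projTorus K (n + 1)) 0 d =
      (boundedExponents (Fin n) (q - 1) d).card := card_units ▸ hilbFn_projTorus K n d
  have count := card_boundedExponents (ι := Fin n) units_pos d
  rw [Fintype.card_fin, ← dimension] at count
  exact count
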